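/- Define the sequence of subspaces V₀ = Ker C and V_i = A^{−1}(V_{i−1} + Im B) ∩ Ker C for i ≥ 1, where A^{−1}(W) denotes the preimage of W under A. Then the sequence is nonincreasing (V_{i+1} ⊆ V_i for all i), each V_i contains V*, and V_i = V* for every i ≥ n. -/

import Mathlib

/-!
The map `Φ W = A⁻¹(W + Im B) ∩ Ker C` is monotone, satisfies `Φ (Ker C) ≤ Ker C`, and its
post-fixed points `W ≤ Φ W` are exactly the controlled invariant subspaces contained in `Ker C`.
Hence the iterates of `Φ` on `Ker C` decrease and stay above every such subspace. Once two
consecutive iterates agree, the sequence is constant and its value is itself a post-fixed point,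
hence the largest one; until then the height (the dimension, for subspaces) drops by at least one
at each step.
-/

section MonotoneIteration

variable {α : Type*} {f : α → α} {x y : α}

theorem le_iterate_of_le_map [Preorder α] (hf : Monotone f) (hy : y ≤ f y) (hyx : y ≤ x)
    (n : ℕ) : y ≤ f^[n] x :=
  calc
    y ≤ f^[n] y := hf.monotone_iterate_of_le_map hy n.zero_le
    _ ≤ f^[n] x := hf.iterate n hyx

theorem isFixedPt_iterate_of_height_le [PartialOrder α] (hf : Monotone f) (hx : f x ≤ x)
    {n : ℕ} (hn : Order.height x ≤ n) : Function.IsFixedPt f (f^[n] x) := by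
  induction n generalizing x with
  | zero =>
    have hmin : IsMin x := Order.height_eq_zero.mp (nonpos_iff_eq_zero.mp hn)
    exact hmin.eq_of_le hx
  | succ n ih =>
    rcases hx.eq_or_lt with heq | hlt
    · rwa [Function.iterate_fixed heq]
    · have hheight : Order.height (f x) + 1 ≤ n + 1 := (Order.height_add_one_le hlt).trans hn
      exact ih (hf hx) ((ENat.add_le_add_iff_right ENat.one_ne_top).mp hheight)

end MonotoneIteration

section ControlledInvariant

variable {R M : Type*} [Semiring R] [AddCommMonoid M] [Module R M]

/-- `W` is `(A, S)`-controlled invariant: `A W ⊆ W + S`. The submodule `S` stands for the range of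
the input map `B`. -/
def IsControlledInvariant (A : Module.End R M) (S W : Submodule R M) : Prop :=
  W ≤ (W ⊔ S).comap A

/-- The map `W ↦ A⁻¹(W + S) ∩ N` whose iterates on `N` compute the largest `(A, S)`-controlled
invariant submodule of `N`; the submodule `N` stands for the kernel of the output map `C`. -/
def controlledInvariantStep (A : Module.End R M) (S N W : Submodule R M) : Submodule R M :=
  (W ⊔ S).comap A ⊓ N

variable {A : Module.End R M} {S N W : Submodule R M}

theorem controlledInvariantStep_mono : Monotone (controlledInvariantStep A S N) :=
  fun _ _ h => inf_le_inf_right N (Submodule.comap_mono (sup_le_sup_right h S))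

theorem controlledInvariantStep_le : controlledInvariantStep A S N W ≤ N :=
  inf_le_right

theorem le_controlledInvariantStep_iff :
    W ≤ controlledInvariantStep A S N W ↔ IsControlledInvariant A S W ∧ W ≤ N :=
  le_inf_iff

theorem isGreatest_iterate_controlledInvariantStep {n : ℕ} (hn : Order.height N ≤ n) :
    IsGreatest {W | IsControlledInvariant A S W ∧ W ≤ N}
      ((controlledInvariantStep A S N)^[n] N) := by
  have hfixed := isFixedPt_iterate_of_height_le
    (controlledInvariantStep_mono (A := A) (S := S)) controlledInvariantStep_le hn
  exact ⟨le_controlledInvariantStep_iff.mp hfixed.ge, fun W hW =>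
    le_iterate_of_le_map controlledInvariantStep_mono
      (le_controlledInvariantStep_iff.mpr hW) hW.2 n⟩

theorem stmt_10_general (A : Module.End R M) (S N Vstar : Submodule R M)
    (hVstar : IsGreatest {W | IsControlledInvariant A S W ∧ W ≤ N} Vstar)
    (Vseq : ℕ → Submodule R M) (hV0 : Vseq 0 = N)
    (hVsucc : ∀ i, Vseq (i + 1) = (Vseq i ⊔ S).comap A ⊓ N) :
    Antitone Vseq ∧ (∀ i, Vstar ≤ Vseq i) ∧ ∀ i : ℕ, Order.height N ≤ i → Vseq i = Vstar := by
  obtain rfl : Vseq = fun i => (controlledInvariantStep A S N)^[i] N := by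
    funext i
    induction i with
    | zero => exact hV0
    | succ i ih => rw [hVsucc, ih, Function.iterate_succ_apply', controlledInvariantStep]
  refine ⟨?antitone, ?above, ?stable⟩
  case antitone =>
    exact controlledInvariantStep_mono.antitone_iterate_of_map_le controlledInvariantStep_le
  case above =>
    exact le_iterate_of_le_map controlledInvariantStep_mono
      (le_controlledInvariantStep_iff.mpr hVstar.1) hVstar.1.2
  case stable =>
    exact fun i hi => (isGreatest_iterate_controlledInvariantStep hi).unique hVstar

end ControlledInvariant

theorem height_submodule_le_finrank {K V : Type*} [DivisionRing K] [AddCommGroup V] [Module K V]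
    [Module.Finite K V] (W : Submodule K V) : Order.height W ≤ Module.finrank K V :=
  calc
    Order.height W ≤ Order.height (⊤ : Submodule K V) := Order.height_mono le_top
    _ = Module.length K V := (Module.length_eq_height K V).symm
    _ = Module.finrank K V := Module.length_eq_finrank K V

/-- the recursion V₀ = Ker C, V_i = A⁻¹(V_{i−1} + Im B) ∩ Ker C is
nonincreasing, each term contains V*, and it converges to V* in at most n steps. -/
theorem stmt_10
    (n m p : ℕ)
    (A : Matrix (Fin n) (Fin n) ℝ) (B : Matrix (Fin n) (Fin m) ℝ)
    (C : Matrix (Fin p) (Fin n) ℝ)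
    -- V* : largest (A, Im B)-controlled invariant subspace contained in Ker C
    (Vstar : Submodule ℝ (Fin n → ℝ))
    (hVinv : ∀ v ∈ Vstar, A.mulVec v ∈ Vstar ⊔ LinearMap.range B.mulVecLin)
    (hVker : Vstar ≤ LinearMap.ker C.mulVecLin)
    (hVmax : ∀ W : Submodule ℝ (Fin n → ℝ),
      (∀ v ∈ W, A.mulVec v ∈ W ⊔ LinearMap.range B.mulVecLin) →
      W ≤ LinearMap.ker C.mulVecLin → W ≤ Vstar)
    -- the recursive sequence of subspaces
    (Vseq : ℕ → Submodule ℝ (Fin n → ℝ))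
    (hV0 : Vseq 0 = LinearMap.ker C.mulVecLin)
    (hVsucc : ∀ i, Vseq (i + 1) =
      Submodule.comap A.mulVecLin (Vseq i ⊔ LinearMap.range B.mulVecLin) ⊓
        LinearMap.ker C.mulVecLin) :
    (∀ i, Vseq (i + 1) ≤ Vseq i) ∧
    (∀ i, Vstar ≤ Vseq i) ∧
    (∀ i, n ≤ i → Vseq i = Vstar) := by
  obtain ⟨hanti, habove, hstable⟩ := stmt_10_general A.mulVecLin _ _ Vstar
    ⟨⟨hVinv, hVker⟩, fun W hW => hVmax W hW.1 hW.2⟩ Vseq hV0 hVsucc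
  exact ⟨fun i => hanti i.le_succ, habove, fun i hi => hstable i
    ((height_submodule_le_finrank _).trans (by simpa using hi))⟩
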